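/- Under the standing assumptions and the two-point gradient scheme with noisy data v^δ, δ > 0, ‖v − v^δ‖ ≤ δ, with ϑ5 > 0 and combination parameters λ_k^δ satisfying (λ_k^δ + (λ_k^δ)^{p*})/(p*(2c0)^{p*−1}) · ‖γ_k^δ − γ_{k−1}^δ‖^{p*} ≤ (ϑ5/ζ) υ_k^δ ‖F(w_k^δ) − v^δ‖^s (ζ > 1) and ≤ c0 ε^p for all k, the discrepancy principle terminates after finitely many steps: there exists a finite index k_δ with ‖F(w_{k_δ}^δ) − v^δ‖ ≤ τδ and ‖F(w_k^δ) − v^δ‖ > τδ for all 0 ≤ k < k_δ. -/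

import Mathlib

/-!
The quantity driving the argument is the Bregman distance `D k = D_{γ k}φ(u*, u k)` from the
iterates to the solution `u*`. If the residual stayed above `τ * δ` forever, `D k` would decrease
by at least a fixed positive amount at every step, which is impossible for nonnegative numbers.

The decrease has two parts, both consequences of the three-point estimate `bregR_sub_le`. The
interpolation `γ k ↦ Im k` increases the distance by at most
`(λ + λ ^ p*) / (p* (2 c0) ^ (p* - 1)) * ‖γ k - γ (k-1)‖ ^ p*`, as long as `D k ≤ D (k-1)`; the
conditions on `λ` bound this by `c0 ε ^ p`, which keeps `w k` in the ball of radius `3 ε`, and by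
`ϑ5 / ζ * υ k * ‖r k‖ ^ s`. The gradient step `Im k ↦ γ (k+1)` decreases the distance by
`ϑ5 * υ k * ‖r k‖ ^ s`: `dual_step_bound` handles the remainder of order `p*`, `pairing_lower`
(tangential cone condition) the gradient term, and the stability estimate the term with `α k`.
`pairing_lower` also shows that `J (r k) ∘ L (w k)` is nonzero, so the quotient in the definition
of `υ k` is a genuine one, and `step_lower_bound` bounds `υ k * ‖r k‖ ^ s` from below.

The three-point estimate rests on Young's inequality, which yields the constant `p * c0` in place
of `2 * c0`, so it requires `2 ≤ p`. For `1 < p < 2` a `p`-convex function has a one-point domain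
(`dom_subsingleton`); then `w 0 = u*` and the discrepancy principle stops at once.
-/

open Filter Topology

noncomputable section

/-- The subdifferential of a convex function `φ : U → (-∞,∞]` at `u`. -/
def Subdiff {U : Type*} [NormedAddCommGroup U] [NormedSpace ℝ U]
    (φ : U → EReal) (u : U) : Set (U →L[ℝ] ℝ) :=
  {γ | ∀ w : U, φ u + ((γ (w - u) : ℝ) : EReal) ≤ φ w}

/-- The Bregman distance `D_γφ(u', u) = φ(u') − φ(u) − γ(u' − u)`. -/
def Breg {U : Type*} [NormedAddCommGroup U] [NormedSpace ℝ U]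
    (φ : U → EReal) (γ : U →L[ℝ] ℝ) (u' u : U) : EReal :=
  φ u' - φ u - ((γ (u' - u) : ℝ) : EReal)

/-- `φ` is `p`-convex with constant `c0`. -/
def PConvex {U : Type*} [NormedAddCommGroup U] [NormedSpace ℝ U]
    (φ : U → EReal) (p c0 : ℝ) : Prop :=
  ∀ u' u : U, ∀ τ : ℝ, 0 ≤ τ → τ ≤ 1 →
    φ (τ • u' + (1 - τ) • u) + ((c0 * τ * (1 - τ) * ‖u - u'‖ ^ p : ℝ) : EReal) ≤
      (τ : EReal) * φ u' + ((1 - τ : ℝ) : EReal) * φ u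

/-- A real normed space is reflexive if the canonical embedding into the double dual
is surjective. -/
def IsReflexiveSpace (U : Type*) [NormedAddCommGroup U] [NormedSpace ℝ U] : Prop :=
  Function.Surjective (NormedSpace.inclusionInDoubleDual ℝ U)

/-- Weak convergence of a sequence in a normed space. -/
def WeakTendsto {E : Type*} [NormedAddCommGroup E] [NormedSpace ℝ E]
    (x : ℕ → E) (x₀ : E) : Prop :=
  ∀ f : E →L[ℝ] ℝ, Tendsto (fun n => f (x n)) atTop (𝓝 (f x₀))

/-- `φ` is weakly (sequentially) lower semicontinuous. -/
def WeakSeqLSC {E : Type*} [NormedAddCommGroup E] [NormedSpace ℝ E]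
    (φ : E → EReal) : Prop :=
  ∀ (x : ℕ → E) (x₀ : E), WeakTendsto x x₀ →
    φ x₀ ≤ Filter.liminf (fun n => φ (x n)) atTop

/-- `x` minimizes `u ↦ φ(u) − ⟨γ, u⟩`. -/
def MinimizesShifted {U : Type*} [NormedAddCommGroup U] [NormedSpace ℝ U]
    (φ : U → EReal) (γ : U →L[ℝ] ℝ) (x : U) : Prop :=
  ∀ y : U, φ x - ((γ x : ℝ) : EReal) ≤ φ y - ((γ y : ℝ) : EReal)


/-! ### Scalar inequalities for the step sizes -/

theorem holderConjugate_of_eq {p q : ℝ} (hp : 1 < p) (h : 1 / p + 1 / q = 1) :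
    p.HolderConjugate q := by
  rw [Real.holderConjugate_iff]
  exact ⟨hp, by simpa [one_div] using h⟩

/-- Young's inequality with the constant `2 * c`, valid because `2 ≤ p`. It bounds the
supremum over `t` of `a * t - c * t ^ p`, which controls the smoothness of the conjugate. -/
theorem young_two {p q c a t : ℝ} (hp : 2 ≤ p) (hpq : p.HolderConjugate q) (hc : 0 < c)
    (ha : 0 ≤ a) (ht : 0 ≤ t) :
    a * t - c * t ^ p ≤ a ^ q / (q * (2 * c) ^ (q - 1)) := by
  have hp0 : 0 < p := by linarith
  have hq0 : 0 < q := hpq.symm.pos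
  have hb : 0 < (p * c) ^ (1 / p) := by positivity
  have hy := Real.young_inequality_of_nonneg (a := (p * c) ^ (1 / p) * t)
    (b := a / (p * c) ^ (1 / p)) (by positivity) (by positivity) hpq
  have e1 : (p * c) ^ (1 / p) * t * (a / (p * c) ^ (1 / p)) = a * t := by
    field_simp
  have e2 : ((p * c) ^ (1 / p) * t) ^ p / p = c * t ^ p := by
    rw [Real.mul_rpow hb.le ht, ← Real.rpow_mul (by positivity), one_div_mul_cancel hp0.ne',
      Real.rpow_one]
    field_simp
  have hq1 : 1 / p * q = q - 1 := by
    have := hpq.symm.sub_one_mul_conj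
    field_simp
    linarith
  have e3 : (a / (p * c) ^ (1 / p)) ^ q / q = a ^ q / (q * (p * c) ^ (q - 1)) := by
    rw [Real.div_rpow ha hb.le, ← Real.rpow_mul (by positivity), hq1]
    field_simp
  have hle : a ^ q / (q * (p * c) ^ (q - 1)) ≤ a ^ q / (q * (2 * c) ^ (q - 1)) := by
    have : 0 < q - 1 := hpq.symm.sub_one_pos
    gcongr
  rw [e1, e2, e3] at hy
  linarith

/-- The step-size rules bound the dual increment: with `t = ‖Im k - Im 0‖`, `N` the norm of
`J (r k) ∘ L (w k)` and `R = ‖r k‖ ^ s`, the number `α * t + υ * N` dominates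
`‖γ (k + 1) - Im k‖`. The two parts contribute at most `th2 * υ * t ^ q` and
`υ * (K * R - th2 * t ^ q)`, and the `th2` terms cancel. -/
theorem dual_step_bound {p q R N t υ α th2 K : ℝ} (hpq : p.HolderConjugate q)
    (ht : 0 ≤ t) (hN : 0 < N) (hυ : 0 < υ) (hα : 0 ≤ α) (hth2 : 0 ≤ th2)
    (hX : 0 ≤ K * R - th2 * t ^ q)
    (hυb : υ ≤ (1 / 2) * (K * R - th2 * t ^ q) ^ (1 / (q - 1)) / N ^ p)
    (hαb : t ≠ 0 → α ≤ 2 ^ ((1 - q) / q) * (th2 * υ) ^ (1 / q)) :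
    (α * t + υ * N) ^ q ≤ K * υ * R := by
  have hq1 : 0 < q - 1 := hpq.symm.sub_one_pos
  have hq0 : 0 < q := hpq.symm.pos
  have hconv : (α * t + υ * N) ^ q ≤ 2 ^ (q - 1) * ((α * t) ^ q + (υ * N) ^ q) :=
    mod_cast NNReal.rpow_add_le_mul_rpow_add_rpow (⟨α * t, by positivity⟩ : NNReal)
      (⟨υ * N, by positivity⟩ : NNReal) (by linarith : 1 ≤ q)
  have h1 : 2 ^ (q - 1) * (α * t) ^ q ≤ th2 * υ * t ^ q := by
    by_cases h0 : t = 0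
    · simp [h0, Real.zero_rpow hq0.ne']
    · have h := Real.rpow_le_rpow hα (hαb h0) hq0.le
      rw [Real.mul_rpow (by positivity) (by positivity), ← Real.rpow_mul (by norm_num),
        ← Real.rpow_mul (by positivity), div_mul_cancel₀ _ hq0.ne', one_div_mul_cancel hq0.ne',
        Real.rpow_one] at h
      have e : (2 : ℝ) ^ (q - 1) * 2 ^ (1 - q) = 1 := by
        rw [← Real.rpow_add (by norm_num)]; simp
      rw [Real.mul_rpow hα ht]
      calc 2 ^ (q - 1) * (α ^ q * t ^ q) = 2 ^ (q - 1) * α ^ q * t ^ q := by ring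
        _ ≤ 2 ^ (q - 1) * (2 ^ (1 - q) * (th2 * υ)) * t ^ q := by gcongr
        _ = (2 ^ (q - 1) * 2 ^ (1 - q)) * (th2 * υ) * t ^ q := by ring
        _ = th2 * υ * t ^ q := by rw [e, one_mul]
  have h2 : 2 ^ (q - 1) * (υ * N) ^ q ≤ υ * (K * R - th2 * t ^ q) := by
    have hNp : 0 < N ^ p := by positivity
    have h3 : 2 * υ * N ^ p ≤ (K * R - th2 * t ^ q) ^ (1 / (q - 1)) := by
      rw [le_div_iff₀ hNp] at hυb
      linarith
    have h := Real.rpow_le_rpow (by positivity) h3 hq1.le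
    have hpq' : p * (q - 1) = q := by
      have := hpq.sub_one_mul_conj
      have := hpq.mul_eq_add
      linarith
    rw [← Real.rpow_mul hX, one_div_mul_cancel hq1.ne', Real.rpow_one,
      Real.mul_rpow (by positivity) hNp.le, Real.mul_rpow (by norm_num) hυ.le,
      ← Real.rpow_mul hN.le, hpq'] at h
    have e : υ ^ q = υ * υ ^ (q - 1) := by
      rw [Real.rpow_sub_one hυ.ne']; field_simp
    rw [Real.mul_rpow hυ.le hN.le, e]
    calc 2 ^ (q - 1) * (υ * υ ^ (q - 1) * N ^ q) = υ * (2 ^ (q - 1) * υ ^ (q - 1) * N ^ q) := by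
          ring
      _ ≤ _ := by gcongr
  linarith

/-- The step size times the residual power stays above a fixed multiple of `ρ ^ p`, the
residual `r` being above `ρ`. -/
theorem step_lower_bound {p q s r ρ N X κ C0 th3 υ : ℝ} (hpq : p.HolderConjugate q)
    (hρ : 0 < ρ) (hr : ρ ≤ r) (hκ : 0 < κ) (hC0 : 0 < C0) (hth3 : 0 < th3)
    (hN : 0 < N) (hNb : N ≤ r ^ (s - 1) * C0) (hX : κ * r ^ s ≤ X)
    (hυ : υ = min ((1 / 2) * X ^ (1 / (q - 1)) / N ^ p) (th3 * r ^ (p - s))) :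
    min ((1 / 2) * κ ^ (p - 1) / C0 ^ p) th3 * ρ ^ p ≤ υ * r ^ s := by
  have hr0 : 0 < r := hρ.trans_le hr
  have hp0 : 0 < p := hpq.pos
  have hp1 : 0 < p - 1 := hpq.sub_one_pos
  have hq1 : 0 < q - 1 := hpq.symm.sub_one_pos
  have hexp : 1 / (q - 1) = p - 1 := by
    have := hpq.mul_eq_add
    rw [div_eq_iff hq1.ne']
    linarith
  have hrs : 0 < r ^ s := by positivity
  have hm : 0 ≤ min ((1 / 2) * κ ^ (p - 1) / C0 ^ p) th3 := by positivity
  refine (mul_le_mul_of_nonneg_left (Real.rpow_le_rpow hρ.le hr hp0.le) hm).trans ?_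
  rw [hυ, hexp]
  rcases min_cases ((1 / 2) * X ^ (p - 1) / N ^ p) (th3 * r ^ (p - s)) with h | h
  · rw [h.1]
    have hXp : (κ * r ^ s) ^ (p - 1) ≤ X ^ (p - 1) := by gcongr
    have hNp : N ^ p ≤ (r ^ (s - 1) * C0) ^ p := by gcongr
    have hNp0 : 0 < N ^ p := by positivity
    calc min ((1 / 2) * κ ^ (p - 1) / C0 ^ p) th3 * r ^ p
        ≤ ((1 / 2) * κ ^ (p - 1) / C0 ^ p) * r ^ p := by gcongr; exact min_le_left _ _
      _ = (1 / 2) * (κ * r ^ s) ^ (p - 1) / (r ^ (s - 1) * C0) ^ p * r ^ s := by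
        have e : r ^ p * (r ^ (s - 1)) ^ p = (r ^ s) ^ (p - 1) * r ^ s := by
          rw [← Real.rpow_mul hr0.le, ← Real.rpow_mul hr0.le, ← Real.rpow_add hr0,
            ← Real.rpow_add hr0]
          ring_nf
        rw [Real.mul_rpow hκ.le hrs.le, Real.mul_rpow (by positivity) hC0.le]
        have : 0 < (r ^ (s - 1)) ^ p := by positivity
        field_simp
        linear_combination e
      _ ≤ (1 / 2) * X ^ (p - 1) / N ^ p * r ^ s := by
        have hX0 : 0 ≤ X ^ (p - 1) := le_trans (by positivity) hXp
        gcongr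
  · rw [h.1]
    have e : r ^ (p - s) * r ^ s = r ^ p := by
      rw [← Real.rpow_add hr0]; ring_nf
    rw [mul_assoc, e]
    gcongr
    exact min_le_right _ _

/-! ### `p`-convex functions and Bregman distances -/

section Convex

variable {U : Type*} [NormedAddCommGroup U] [NormedSpace ℝ U] {φ : U → EReal}

/-- For `p < 2` a `p`-convex function has at most one point in its domain: the midpoint
inequality with constant `K`, applied on the three half-length segments centred at the quarter
points and the midpoint, implies the one with constant `2 ^ (2 - p) * K`, and iterating makes the constant unbounded. -/
theorem dom_subsingleton {p c0 : ℝ} (hp2 : p < 2) (hc0 : 0 < c0)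
    (hbot : ∀ u, φ u ≠ ⊥) (hpc : PConvex φ p c0) {x y : U} (hx : φ x ≠ ⊤) (hy : φ y ≠ ⊤) :
    x = y := by
  have hco : ∀ z, φ z ≠ ⊤ → (((φ z).toReal : ℝ) : EReal) = φ z := fun z hz =>
    EReal.coe_toReal hz (hbot z)
  have key : ∀ x y : U, φ x ≠ ⊤ → φ y ≠ ⊤ → φ (midpoint ℝ x y) ≠ ⊤ ∧
      c0 / 2 * ‖x - y‖ ^ p ≤
        (φ x).toReal + (φ y).toReal - 2 * (φ (midpoint ℝ x y)).toReal := by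
    intro x y hx hy
    have h := hpc x y (1 / 2) (by norm_num) (by norm_num)
    have e : (1 / 2 : ℝ) • x + (1 - 1 / 2 : ℝ) • y = midpoint ℝ x y := by
      rw [midpoint_eq_smul_add, smul_add]; norm_num
    rw [e, ← hco x hx, ← hco y hy, ← EReal.coe_mul, ← EReal.coe_mul, ← EReal.coe_add] at h
    have hm : φ (midpoint ℝ x y) ≠ ⊤ := by
      intro ht
      rw [ht, EReal.top_add_coe, top_le_iff] at h
      exact EReal.coe_ne_top _ h
    refine ⟨hm, ?_⟩
    rw [← hco _ hm, ← EReal.coe_add, EReal.coe_le_coe_iff, norm_sub_rev] at h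
    linarith
  have iter : ∀ n : ℕ, ∀ x y : U, φ x ≠ ⊤ → φ y ≠ ⊤ →
      ((2 : ℝ) ^ (2 - p)) ^ n * (c0 / 2) * ‖x - y‖ ^ p ≤
        (φ x).toReal + (φ y).toReal - 2 * (φ (midpoint ℝ x y)).toReal := by
    intro n
    induction n with
    | zero => intro x y hx hy; simpa using (key x y hx hy).2
    | succ n ih =>
      intro x y hx hy
      set m := midpoint ℝ x y with hm
      have hmt := (key x y hx hy).1
      have h1 := ih x m hx hmt
      have h2 := ih m y hmt hy
      have h3 := ih (midpoint ℝ x m) (midpoint ℝ m y) (key x m hx hmt).1 (key m y hmt hy).1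
      have em : midpoint ℝ (midpoint ℝ x m) (midpoint ℝ m y) = m := by
        rw [hm]; simp only [midpoint_eq_smul_add, invOf_eq_inv]; module
      have n1 : ‖x - m‖ = ‖x - y‖ / 2 := by
        have : x - m = (1 / 2 : ℝ) • (x - y) := by
          rw [hm]; simp only [midpoint_eq_smul_add, invOf_eq_inv]; module
        rw [this, norm_smul]; norm_num; ring
      have n2 : ‖m - y‖ = ‖x - y‖ / 2 := by
        have : m - y = (1 / 2 : ℝ) • (x - y) := by
          rw [hm]; simp only [midpoint_eq_smul_add, invOf_eq_inv]; module
        rw [this, norm_smul]; norm_num; ring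
      have n3 : ‖midpoint ℝ x m - midpoint ℝ m y‖ = ‖x - y‖ / 2 := by
        have : midpoint ℝ x m - midpoint ℝ m y = (1 / 2 : ℝ) • (x - y) := by
          rw [hm]; simp only [midpoint_eq_smul_add, invOf_eq_inv]; module
        rw [this, norm_smul]; norm_num; ring
      rw [em, n3] at h3
      rw [n1] at h1
      rw [n2] at h2
      have e : (2 : ℝ) ^ (2 - p) * ‖x - y‖ ^ p = 4 * (‖x - y‖ / 2) ^ p := by
        rw [Real.div_rpow (norm_nonneg _) (by norm_num), Real.rpow_sub (by norm_num)]
        norm_num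
        ring
      have e' : ((2 : ℝ) ^ (2 - p)) ^ (n + 1) * (c0 / 2) * ‖x - y‖ ^ p =
          4 * (((2 : ℝ) ^ (2 - p)) ^ n * (c0 / 2) * (‖x - y‖ / 2) ^ p) := by
        rw [pow_succ]
        linear_combination (((2 : ℝ) ^ (2 - p)) ^ n * (c0 / 2)) * e
      rw [e']
      linarith
  by_contra hne
  have hpos : 0 < c0 / 2 * ‖x - y‖ ^ p := by
    have : 0 < ‖x - y‖ := norm_pos_iff.2 (sub_ne_zero.2 hne)
    positivity
  have hgt : (1 : ℝ) < 2 ^ (2 - p) := Real.one_lt_rpow (by norm_num) (by linarith)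
  obtain ⟨n, hn⟩ := pow_unbounded_of_one_lt
    (((φ x).toReal + (φ y).toReal - 2 * (φ (midpoint ℝ x y)).toReal) /
      (c0 / 2 * ‖x - y‖ ^ p)) hgt
  rw [div_lt_iff₀ hpos] at hn
  have := iter n x y hx hy
  linarith

theorem MinimizesShifted.ne_top {a : U →L[ℝ] ℝ} {x z : U} (h : MinimizesShifted φ a x)
    (hz : φ z ≠ ⊤) (hbot : ∀ u, φ u ≠ ⊥) : φ x ≠ ⊤ := by
  intro hx
  have := h z
  rw [hx, EReal.top_sub_coe, top_le_iff, ← EReal.coe_toReal hz (hbot z), ← EReal.coe_sub] at this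
  exact EReal.coe_ne_top _ this

theorem MinimizesShifted.mem_subdiff {a : U →L[ℝ] ℝ} {x z : U} (h : MinimizesShifted φ a x)
    (hz : φ z ≠ ⊤) (hbot : ∀ u, φ u ≠ ⊥) : a ∈ Subdiff φ x := by
  intro y
  by_cases hy : φ y = ⊤
  · rw [hy]; exact le_top
  · have hx := h.ne_top hz hbot
    have := h y
    rw [← EReal.coe_toReal hx (hbot x), ← EReal.coe_toReal hy (hbot y), ← EReal.coe_sub,
      ← EReal.coe_sub, EReal.coe_le_coe_iff] at this
    rw [← EReal.coe_toReal hx (hbot x), ← EReal.coe_toReal hy (hbot y), ← EReal.coe_add,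
      EReal.coe_le_coe_iff, map_sub]
    linarith

/-- The Bregman distance as a real number, meaningful when `φ` is finite at both points. -/
def bregR (φ : U → EReal) (a : U →L[ℝ] ℝ) (y x : U) : ℝ :=
  (φ y).toReal - (φ x).toReal - a (y - x)

theorem Breg_eq_coe {a : U →L[ℝ] ℝ} {x y : U} (hbot : ∀ u, φ u ≠ ⊥) (hx : φ x ≠ ⊤)
    (hy : φ y ≠ ⊤) : Breg φ a y x = (bregR φ a y x : ℝ) := by
  unfold Breg bregR
  rw [EReal.coe_sub, EReal.coe_sub, EReal.coe_toReal hx (hbot x), EReal.coe_toReal hy (hbot y)]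

/-- Three-point estimate: the change of the Bregman distance to `z` under a change of the dual
variable from `a` to `b` is its linearization plus a remainder of order `‖b - a‖ ^ q`. -/
theorem bregR_sub_le {p q c0 : ℝ} (hp : 2 ≤ p) (hpq : p.HolderConjugate q) (hc0 : 0 < c0)
    {a b : U →L[ℝ] ℝ} {x y z : U} (hlow : c0 * ‖y - x‖ ^ p ≤ bregR φ a y x) :
    bregR φ b z y - bregR φ a z x ≤
      ‖b - a‖ ^ q / (q * (2 * c0) ^ (q - 1)) + (b - a) (x - z) := by
  have hy := young_two hp hpq hc0 (norm_nonneg (b - a)) (norm_nonneg (y - x))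
  have hop : (b - a) (y - x) ≤ ‖b - a‖ * ‖y - x‖ :=
    (le_abs_self _).trans ((b - a).le_opNorm _)
  unfold bregR at *
  simp only [map_sub, sub_apply] at *
  linarith

end Convex

/-! ### Termination of the iteration -/

/-- The tangential cone condition makes the pairing of `J r ∘ L` with the error large, where
`r = f - vδ` is the residual at a point with image `f` and `d = L (u - u*)`. -/
theorem pairing_lower {V : Type*} [NormedAddCommGroup V] [NormedSpace ℝ V]
    {J : V → (V →L[ℝ] ℝ)} {s η δ τ : ℝ} (hη0 : 0 ≤ η) (hτ : 1 < τ)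
    (hJnorm : ∀ x : V, ‖J x‖ = ‖x‖ ^ (s - 1)) (hJid : ∀ x : V, J x x = ‖x‖ ^ s)
    {f v vδ d : V} (hnoise : ‖v - vδ‖ ≤ δ) (hδ : 0 < δ) (hr : τ * δ < ‖f - vδ‖)
    (htan : ‖v - f + d‖ ≤ η * ‖v - f‖) :
    (1 - η - (1 + η) / τ) * ‖f - vδ‖ ^ s ≤ J (f - vδ) d := by
  set r := f - vδ with hrdef
  have hr0 : 0 < ‖r‖ := lt_trans (by positivity) hr
  have hδr : δ ≤ ‖r‖ / τ := by rw [le_div_iff₀ (by linarith)]; linarith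
  have e : d = (v - f + d) + r - (v - vδ) := by rw [hrdef]; abel
  have hvf : ‖v - f‖ ≤ δ + ‖r‖ := by
    have : v - f = (v - vδ) - r := by rw [hrdef]; abel
    rw [this]
    exact (norm_sub_le _ _).trans (by linarith)
  have h1 : -(‖r‖ ^ (s - 1) * (η * (δ + ‖r‖))) ≤ J r (v - f + d) := by
    have := (J r).le_opNorm (v - f + d)
    rw [hJnorm, Real.norm_eq_abs] at this
    have h2 : ‖r‖ ^ (s - 1) * ‖v - f + d‖ ≤ ‖r‖ ^ (s - 1) * (η * (δ + ‖r‖)) := by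
      gcongr
      exact htan.trans (by gcongr)
    exact (abs_le.1 (this.trans h2)).1
  have h2 : J r (v - vδ) ≤ ‖r‖ ^ (s - 1) * δ := by
    have := (J r).le_opNorm (v - vδ)
    rw [hJnorm, Real.norm_eq_abs] at this
    exact (le_abs_self _).trans (this.trans (by gcongr))
  have hJ : J r d = J r (v - f + d) + ‖r‖ ^ s - J r (v - vδ) := by
    conv_lhs => rw [e]
    rw [map_sub, map_add, hJid]
  have es : ‖r‖ ^ s = ‖r‖ ^ (s - 1) * ‖r‖ := by
    rw [Real.rpow_sub_one hr0.ne']; field_simp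
  have h3 : ‖r‖ ^ (s - 1) * ((1 + η) * δ) ≤ ‖r‖ ^ (s - 1) * ((1 + η) * (‖r‖ / τ)) := by
    gcongr
  rw [hJ]
  have e4 : (1 - η - (1 + η) / τ) * ‖r‖ ^ s =
      ‖r‖ ^ s - η * (‖r‖ ^ (s - 1) * ‖r‖) - ‖r‖ ^ (s - 1) * ((1 + η) * (‖r‖ / τ)) := by
    rw [es]; ring
  rw [e4]
  linarith

/-- Proposition 3.5: the discrepancy principle terminates after finitely
many steps: there is a finite index `k_δ` with `‖F(w_{k_δ}^δ) − v^δ‖ ≤ τδ` and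
`‖F(w_k^δ) − v^δ‖ > τδ` for all `0 ≤ k < k_δ`. -/
theorem two_point_gradient_discrepancy_principle_finite
    {U V : Type*} [NormedAddCommGroup U] [NormedSpace ℝ U] [CompleteSpace U]
    [NormedAddCommGroup V] [NormedSpace ℝ V] [CompleteSpace V]
    (hrefl : IsReflexiveSpace U)
    (S : Set U) (F : U → V)
    (φ : U → EReal) (p c0 pstar : ℝ) (hp : 1 < p) (hc0 : 0 < c0)
    (hconj : 1 / p + 1 / pstar = 1)
    (hne_bot : ∀ u, φ u ≠ ⊥) (hproper : ∃ u, φ u ≠ ⊤)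
    (hwlsc : WeakSeqLSC φ) (hpconv : PConvex φ p c0)
    (hbreg_low : ∀ u' u : U, ∀ γ' ∈ Subdiff φ u,
      ((c0 * ‖u' - u‖ ^ p : ℝ) : EReal) ≤ Breg φ γ' u' u)
    (u0 : U) (γ0 : U →L[ℝ] ℝ) (hγ0 : γ0 ∈ Subdiff φ u0)
    (ε : ℝ) (hε : 0 < ε) (v : V)
    (hball : Metric.closedBall u0 (3 * ε) ⊆ S)
    (ustar : U) (hstarS : ustar ∈ S) (hstarφ : φ ustar ≠ ⊤) (hstarsol : F ustar = v)
    (hstarBreg : Breg φ γ0 ustar u0 ≤ ((c0 * ε ^ p : ℝ) : EReal))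
    (C : ℝ) (hCpos : 0 < C)
    (hstab : ∀ u' u'' : U, u' ∈ Metric.closedBall u0 (3 * ε) →
      u'' ∈ Metric.closedBall u0 (3 * ε) →
      ∀ γ' ∈ Subdiff φ u', Breg φ γ' u'' u' ≤ ((C * ‖F u'' - F u'‖ ^ p : ℝ) : EReal))
    (L : U → (U →L[ℝ] V)) (η C0 : ℝ) (hη0 : 0 ≤ η) (hη1 : η < 1) (hC0 : 0 < C0)
    (htan : ∀ u' u'' : U, u' ∈ Metric.closedBall u0 (3 * ε) → φ u' ≠ ⊤ →
      u'' ∈ Metric.closedBall u0 (3 * ε) → φ u'' ≠ ⊤ →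
      ‖F u'' - F u' - L u' (u'' - u')‖ ≤ η * ‖F u'' - F u'‖)
    (hLb : ∀ u' ∈ Metric.closedBall u0 (3 * ε), ‖L u'‖ ≤ C0)
    (s : ℝ) (hs : 1 < s) (J : V → (V →L[ℝ] ℝ))
    (hJnorm : ∀ x : V, ‖J x‖ = ‖x‖ ^ (s - 1)) (hJid : ∀ x : V, J x x = ‖x‖ ^ s)
    (δ : ℝ) (hδ : 0 < δ) (vδ : V) (hnoise : ‖v - vδ‖ ≤ δ) (τ : ℝ) (hτ : 1 < τ)
    (th1 th2bar th3 th4 : ℝ) (hth1 : 0 < th1) (hth2bar : 0 < th2bar)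
    (hth3 : 0 < th3) (hth4 : 0 < th4) (hth21 : th2bar < th1)
    -- the two-point gradient iteration
    (γ Im : ℕ → (U →L[ℝ] ℝ)) (u w : ℕ → U) (lam υ α th2 : ℕ → ℝ)
    (hγinit : γ 0 = γ0) (huinit : u 0 = u0)
    (hlam : ∀ k, 0 ≤ lam k)
    (hIm : ∀ k, Im k = γ k + lam k • (γ k - γ (k - 1)))
    (hw : ∀ k, MinimizesShifted φ (Im k) (w k))
    (hu : ∀ k, MinimizesShifted φ (γ k) (u k))
    (hγrec : ∀ k, γ (k + 1) =
      (1 - α k) • Im k - υ k • ((J (F (w k) - vδ)).comp (L (w k))) + α k • Im 0)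
    -- step sizes
    (hth2 : ∀ k, 0 ≤ th2 k)
    (hth2a : ∀ k, th2 k * ‖Im k - Im 0‖ ^ pstar ≤ th2bar ^ (pstar - 1) * ‖F (w k) - vδ‖ ^ s)
    (hth2b : ∀ k, th2bar ^ (pstar - 1) * ‖F (w k) - vδ‖ ^ s ≤
      th1 ^ (pstar - 1) * ‖F (w k) - vδ‖ ^ s)
    (hυ : ∀ k, υ k = if τ * δ < ‖F (w k) - vδ‖ then
        min ((1 / 2) * (th1 ^ (pstar - 1) * ‖F (w k) - vδ‖ ^ s -
              th2 k * ‖Im k - Im 0‖ ^ pstar) ^ (1 / (pstar - 1)) /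
              ‖(J (F (w k) - vδ)).comp (L (w k))‖ ^ p)
            (th3 * ‖F (w k) - vδ‖ ^ (p - s))
      else 0)
    (hα0 : ∀ k, 0 ≤ α k) (hα1 : ∀ k, α k ≤ 1)
    (hαb : ∀ k, υ k ≠ 0 → ‖Im k - Im 0‖ ≠ 0 →
      α k ≤ min (th4 * υ k * ‖F (w k) - vδ‖ ^ (s - 1) / ‖Im k - Im 0‖)
              (2 ^ ((1 - pstar) / pstar) * (th2 k * υ k) ^ (1 / pstar)))
    -- positivity of ϑ5 and the conditions on the combination parameters
    (th5 ζ : ℝ) (hζ : 1 < ζ)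
    (hth5 : th5 = 1 - (C / c0) ^ (1 / p) * th4 - η -
      th1 ^ (pstar - 1) / (pstar * (2 * c0) ^ (pstar - 1)) -
      ((C / c0) ^ (1 / p) * th4 + 1 + η) / τ)
    (hth5pos : 0 < th5)
    (hlamcond1 : ∀ k, (lam k + lam k ^ pstar) / (pstar * (2 * c0) ^ (pstar - 1)) *
        ‖γ k - γ (k - 1)‖ ^ pstar ≤ th5 / ζ * υ k * ‖F (w k) - vδ‖ ^ s)
    (hlamcond2 : ∀ k, (lam k + lam k ^ pstar) / (pstar * (2 * c0) ^ (pstar - 1)) *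
        ‖γ k - γ (k - 1)‖ ^ pstar ≤ c0 * ε ^ p) :
    ∃ kδ : ℕ, ‖F (w kδ) - vδ‖ ≤ τ * δ ∧ ∀ k < kδ, τ * δ < ‖F (w k) - vδ‖ := by
  have hpq := holderConjugate_of_eq hp hconj
  have hq1 : 0 < pstar - 1 := hpq.symm.sub_one_pos
  have hq0 : 0 < pstar := hpq.symm.pos
  have hp0 : 0 < p := hpq.pos
  have hstar0 : ∀ k, φ (w k) ≠ ⊤ := fun k => (hw k).ne_top hstarφ hne_bot
  have hu0 : ∀ k, φ (u k) ≠ ⊤ := fun k => (hu k).ne_top hstarφ hne_bot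
  by_cases hex : ∃ k, ‖F (w k) - vδ‖ ≤ τ * δ
  · classical
    exact ⟨Nat.find hex, Nat.find_spec hex, fun k hk => not_le.1 (Nat.find_min hex hk)⟩
  exfalso
  push Not at hex
  -- the domain of `φ` is a single point when `p < 2`, so `w 0` already solves the equation
  have hp2 : 2 ≤ p := by
    by_contra hlt
    have h := dom_subsingleton (not_le.1 hlt) hc0 hne_bot hpconv (hstar0 0) hstarφ
    have h0 := hex 0
    rw [h, hstarsol] at h0
    nlinarith
  have hlow : ∀ (a : U →L[ℝ] ℝ) (x y : U), MinimizesShifted φ a x → φ y ≠ ⊤ →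
      c0 * ‖y - x‖ ^ p ≤ bregR φ a y x := by
    intro a x y hx hy
    have h := hbreg_low y x a (hx.mem_subdiff hstarφ hne_bot)
    rwa [Breg_eq_coe hne_bot (hx.ne_top hstarφ hne_bot) hy, EReal.coe_le_coe_iff] at h
  set D : ℕ → ℝ := fun k => bregR φ (γ k) ustar (u k) with hD
  set E : ℕ → ℝ := fun k => bregR φ (Im k) ustar (w k) with hE
  set K : ℝ := pstar * (2 * c0) ^ (pstar - 1) with hK
  have hKpos : 0 < K := by positivity
  have hD0 : D 0 ≤ c0 * ε ^ p := by
    have h := hstarBreg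
    rw [← huinit, ← hγinit, Breg_eq_coe hne_bot (hu0 0) hstarφ, EReal.coe_le_coe_iff] at h
    exact h
  have hDlow : ∀ k, c0 * ‖ustar - u k‖ ^ p ≤ D k := fun k => hlow _ _ _ (hu k) hstarφ
  have hElow : ∀ k, c0 * ‖ustar - w k‖ ^ p ≤ E k := fun k => hlow _ _ _ (hw k) hstarφ
  have hstarball' : ‖ustar - u0‖ ≤ ε := by
    have h := (hDlow 0).trans hD0
    rw [huinit] at h
    exact (Real.rpow_le_rpow_iff (norm_nonneg _) hε.le hp0).1 (le_of_mul_le_mul_left h hc0)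
  have hstarball : ustar ∈ Metric.closedBall u0 (3 * ε) := by
    rw [mem_closedBall_iff_norm]; linarith
  -- the linear term is estimated by applying the three-point estimate backwards, from `γ k`
  -- to `γ (k - 1)`; at `k = 0` truncated subtraction encodes the convention `γ (-1) = γ 0`
  have hinterp : ∀ k, D k ≤ D (k - 1) →
      E k ≤ D k + (lam k + lam k ^ pstar) / K * ‖γ k - γ (k - 1)‖ ^ pstar := by
    intro k hmono
    have h1 : E k - D k ≤ ‖Im k - γ k‖ ^ pstar / K + (Im k - γ k) (u k - ustar) :=
      bregR_sub_le hp2 hpq hc0 (hlow _ _ _ (hu k) (hstar0 k))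
    have h2 : D (k - 1) - D k ≤
        ‖γ (k - 1) - γ k‖ ^ pstar / K + (γ (k - 1) - γ k) (u k - ustar) :=
      bregR_sub_le hp2 hpq hc0 (hlow _ _ _ (hu k) (hu0 (k - 1)))
    have e : Im k - γ k = lam k • (γ k - γ (k - 1)) := by rw [hIm k]; abel
    rw [e, norm_smul, Real.norm_of_nonneg (hlam k), Real.mul_rpow (hlam k) (norm_nonneg _)] at h1
    rw [norm_sub_rev] at h2
    have e2 : (γ (k - 1) - γ k) (u k - ustar) = -((γ k - γ (k - 1)) (u k - ustar)) := by
      rw [← neg_sub (γ k), neg_apply]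
    rw [e2] at h2
    rw [smul_apply, smul_eq_mul] at h1
    have h3 : lam k * ((γ k - γ (k - 1)) (u k - ustar)) ≤
        lam k * (‖γ k - γ (k - 1)‖ ^ pstar / K) :=
      mul_le_mul_of_nonneg_left (by linarith) (hlam k)
    have e3 : (lam k + lam k ^ pstar) / K * ‖γ k - γ (k - 1)‖ ^ pstar =
        lam k * (‖γ k - γ (k - 1)‖ ^ pstar / K) +
          lam k ^ pstar * ‖γ k - γ (k - 1)‖ ^ pstar / K := by
      ring
    linarith
  have hwball : ∀ k, D k ≤ c0 * ε ^ p → D k ≤ D (k - 1) →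
      w k ∈ Metric.closedBall u0 (3 * ε) := by
    intro k hk hmono
    have h1 : c0 * ‖ustar - w k‖ ^ p ≤ c0 * (2 * ε ^ p) := by
      linarith [hinterp k hmono, hlamcond2 k, hElow k]
    have h2 : 2 * ε ^ p ≤ (2 * ε) ^ p := by
      rw [Real.mul_rpow (by norm_num) hε.le]
      have : (2 : ℝ) ≤ 2 ^ p := Real.self_le_rpow_of_one_le (by norm_num) hp.le
      gcongr
    have h3 : ‖ustar - w k‖ ≤ 2 * ε :=
      (Real.rpow_le_rpow_iff (norm_nonneg _) (by positivity) hp0).1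
        ((le_of_mul_le_mul_left h1 hc0).trans h2)
    rw [mem_closedBall_iff_norm]
    have e : w k - u0 = (ustar - u0) - (ustar - w k) := by abel
    rw [e]
    exact (norm_sub_le _ _).trans (by linarith)
  set κ : ℝ := th1 ^ (pstar - 1) - th2bar ^ (pstar - 1) with hκ
  have hκpos : 0 < κ := sub_pos.2 (Real.rpow_lt_rpow hth2bar.le hth21 hq1)
  set m : ℝ := min ((1 / 2) * κ ^ (p - 1) / C0 ^ p) th3 * (τ * δ) ^ p with hm
  have hτ0 : 0 < τ := by linarith
  have hmpos : 0 < m := by positivity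
  have hCc : 0 ≤ (C / c0) ^ (1 / p) := by positivity
  -- `th5` is what remains of the coefficient `1 - η - (1 + η) / τ` of the gradient term after
  -- the `α` term and the remainder of order `pstar` are absorbed
  have hgrad : ∀ k, w k ∈ Metric.closedBall u0 (3 * ε) →
      D (k + 1) ≤ E k - th5 * (υ k * ‖F (w k) - vδ‖ ^ s) ∧
        m ≤ υ k * ‖F (w k) - vδ‖ ^ s := by
    intro k hk
    have hr := hex k
    have hυk := hυ k
    rw [if_pos hr] at hυk
    have hr0 : 0 < ‖F (w k) - vδ‖ := lt_trans (by positivity) hr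
    have hrs : 0 < ‖F (w k) - vδ‖ ^ s := by positivity
    have hrs1 : ‖F (w k) - vδ‖ ^ (s - 1) * ‖F (w k) - vδ‖ = ‖F (w k) - vδ‖ ^ s := by
      rw [Real.rpow_sub_one hr0.ne']; field_simp
    set A := (J (F (w k) - vδ)).comp (L (w k)) with hA
    have hpair : (1 - η - (1 + η) / τ) * ‖F (w k) - vδ‖ ^ s ≤ A (w k - ustar) := by
      refine pairing_lower hη0 hτ hJnorm hJid hnoise hδ hr ?_
      have h := htan (w k) ustar hk (hstar0 k) hstarball hstarφ
      rw [hstarsol] at h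
      rwa [← neg_sub ustar, map_neg, ← sub_eq_add_neg]
    have hcoef : th5 + (C / c0) ^ (1 / p) * th4 * (1 + 1 / τ) + th1 ^ (pstar - 1) / K =
        1 - η - (1 + η) / τ := by
      rw [hth5]; ring
    have hcpos : 0 < 1 - η - (1 + η) / τ := by
      rw [← hcoef]; positivity
    have hN : 0 < ‖A‖ := by
      rw [norm_pos_iff]
      intro h0
      rw [h0, zero_apply] at hpair
      exact absurd hpair (not_le.2 (by positivity))
    have hNb : ‖A‖ ≤ ‖F (w k) - vδ‖ ^ (s - 1) * C0 := by
      refine (ContinuousLinearMap.opNorm_comp_le _ _).trans ?_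
      rw [hJnorm]
      gcongr
      exact hLb _ hk
    have hX : κ * ‖F (w k) - vδ‖ ^ s ≤
        th1 ^ (pstar - 1) * ‖F (w k) - vδ‖ ^ s - th2 k * ‖Im k - Im 0‖ ^ pstar := by
      rw [hκ, sub_mul]; linarith [hth2a k]
    have hmle : m ≤ υ k * ‖F (w k) - vδ‖ ^ s :=
      step_lower_bound hpq (by positivity) hr.le hκpos hC0 hth3 hN hNb hX hυk
    have hυpos : 0 < υ k := pos_of_mul_pos_left (hmpos.trans_le hmle) hrs.le
    refine ⟨?_, hmle⟩
    have hX0 := le_trans (by positivity) hX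
    have hαt : ‖Im k - Im 0‖ ≠ 0 → _ := hαb k hυpos.ne'
    have hstep := dual_step_bound hpq (norm_nonneg (Im k - Im 0)) hN hυpos (hα0 k) (hth2 k) hX0
      (hυk.le.trans (min_le_left _ _)) (fun h => (hαt h).trans (min_le_right _ _))
    have hαt' : α k * ‖Im k - Im 0‖ ≤ th4 * υ k * ‖F (w k) - vδ‖ ^ (s - 1) := by
      by_cases h0 : ‖Im k - Im 0‖ = 0
      · rw [h0, mul_zero]; positivity
      · have := (hαt h0).trans (min_le_left _ _)
        rwa [le_div_iff₀ (lt_of_le_of_ne (norm_nonneg _) (Ne.symm h0))] at this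
    have h1 : D (k + 1) - E k ≤
        ‖γ (k + 1) - Im k‖ ^ pstar / K + (γ (k + 1) - Im k) (w k - ustar) :=
      bregR_sub_le hp2 hpq hc0 (hlow _ _ _ (hw k) (hu0 (k + 1)))
    have e : γ (k + 1) - Im k = -(α k • (Im k - Im 0) + υ k • A) := by
      rw [hγrec k]; module
    have hnorm : ‖γ (k + 1) - Im k‖ ≤ α k * ‖Im k - Im 0‖ + υ k * ‖A‖ := by
      rw [e, norm_neg]
      refine (norm_add_le _ _).trans ?_
      rw [norm_smul, norm_smul, Real.norm_of_nonneg (hα0 k), Real.norm_of_nonneg hυpos.le]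
    have h2 : ‖γ (k + 1) - Im k‖ ^ pstar / K ≤
        th1 ^ (pstar - 1) * υ k * ‖F (w k) - vδ‖ ^ s / K := by
      gcongr
      exact (Real.rpow_le_rpow (norm_nonneg _) hnorm hq0.le).trans hstep
    have hdist : ‖w k - ustar‖ ≤ (C / c0) ^ (1 / p) * ((1 + 1 / τ) * ‖F (w k) - vδ‖) := by
      have hs := hstab (w k) ustar hk hstarball (Im k) ((hw k).mem_subdiff hstarφ hne_bot)
      rw [Breg_eq_coe hne_bot (hstar0 k) hstarφ, EReal.coe_le_coe_iff, hstarsol] at hs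
      have h3 := (hElow k).trans hs
      have h4 : ‖v - F (w k)‖ ≤ (1 + 1 / τ) * ‖F (w k) - vδ‖ := by
        have e4 : v - F (w k) = (v - vδ) - (F (w k) - vδ) := by abel
        have h5 : δ ≤ ‖F (w k) - vδ‖ / τ := by rw [le_div_iff₀ hτ0]; linarith
        rw [e4]
        refine (norm_sub_le _ _).trans ?_
        rw [add_mul, one_mul, one_div_mul_eq_div]
        linarith
      have h6 : ‖ustar - w k‖ ≤ (C / c0) ^ (1 / p) * ‖v - F (w k)‖ := by
        refine (Real.rpow_le_rpow_iff (norm_nonneg _) (by positivity) hp0).1 ?_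
        rw [Real.mul_rpow hCc (norm_nonneg _), ← Real.rpow_mul (by positivity),
          one_div_mul_cancel hp0.ne', Real.rpow_one, div_mul_eq_mul_div, le_div_iff₀ hc0]
        linarith
      rw [norm_sub_rev]
      exact h6.trans (by gcongr)
    have h3 : -(α k * (Im k - Im 0) (w k - ustar)) ≤
        (C / c0) ^ (1 / p) * th4 * (1 + 1 / τ) * (υ k * ‖F (w k) - vδ‖ ^ s) := by
      calc -(α k * (Im k - Im 0) (w k - ustar))
          = α k * -((Im k - Im 0) (w k - ustar)) := by ring
        _ ≤ α k * (‖Im k - Im 0‖ * ‖w k - ustar‖) := by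
          refine mul_le_mul_of_nonneg_left ?_ (hα0 k)
          exact (neg_le_abs _).trans ((Im k - Im 0).le_opNorm _)
        _ = α k * ‖Im k - Im 0‖ * ‖w k - ustar‖ := by ring
        _ ≤ th4 * υ k * ‖F (w k) - vδ‖ ^ (s - 1) *
            ((C / c0) ^ (1 / p) * ((1 + 1 / τ) * ‖F (w k) - vδ‖)) := by gcongr
        _ = _ := by rw [← hrs1]; ring
    have h4 : (γ (k + 1) - Im k) (w k - ustar) =
        -(α k * (Im k - Im 0) (w k - ustar)) - υ k * A (w k - ustar) := by
      rw [e, neg_apply, add_apply, smul_apply, smul_apply, smul_eq_mul, smul_eq_mul]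
      ring
    have h5 := mul_le_mul_of_nonneg_left hpair hυpos.le
    have h6 : th1 ^ (pstar - 1) * υ k * ‖F (w k) - vδ‖ ^ s / K =
        th1 ^ (pstar - 1) / K * (υ k * ‖F (w k) - vδ‖ ^ s) := by ring
    have h7 : υ k * ((1 - η - (1 + η) / τ) * ‖F (w k) - vδ‖ ^ s) =
        th5 * (υ k * ‖F (w k) - vδ‖ ^ s) +
        (C / c0) ^ (1 / p) * th4 * (1 + 1 / τ) * (υ k * ‖F (w k) - vδ‖ ^ s) +
        th1 ^ (pstar - 1) / K * (υ k * ‖F (w k) - vδ‖ ^ s) := by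
      rw [← hcoef]; ring
    linarith
  set c : ℝ := th5 * (1 - 1 / ζ) with hc
  have hcpos : 0 < c := by
    have : 1 / ζ < 1 := by rw [div_lt_one (by linarith)]; exact hζ
    exact mul_pos hth5pos (by linarith)
  have hdec : ∀ k, D k ≤ c0 * ε ^ p → D k ≤ D (k - 1) → D (k + 1) ≤ D k - c * m := by
    intro k hk hmono
    obtain ⟨h1, h2⟩ := hgrad k (hwball k hk hmono)
    have h3 := hinterp k hmono
    have h4 := hlamcond1 k
    have h5 := mul_le_mul_of_nonneg_left h2 hcpos.le
    have h6 : th5 / ζ * υ k * ‖F (w k) - vδ‖ ^ s =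
        th5 * (υ k * ‖F (w k) - vδ‖ ^ s) - c * (υ k * ‖F (w k) - vδ‖ ^ s) := by
      rw [hc]; ring
    linarith
  have hcm : 0 < c * m := mul_pos hcpos hmpos
  have hall : ∀ k : ℕ, D k ≤ c0 * ε ^ p - k * (c * m) ∧ D k ≤ D (k - 1) := by
    intro k
    induction k with
    | zero => simpa using hD0
    | succ k ih =>
      have hk : (0 : ℝ) ≤ k * (c * m) := by positivity
      have h := hdec k (by linarith [ih.1]) ih.2
      refine ⟨?_, ?_⟩
      · push_cast
        linarith [ih.1]
      · rw [Nat.add_sub_cancel]; linarith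
  obtain ⟨n, hn⟩ := exists_nat_gt (c0 * ε ^ p / (c * m))
  rw [div_lt_iff₀ hcm] at hn
  have hnonneg : 0 ≤ D n := le_trans (by positivity) (hDlow n)
  linarith [(hall n).1]
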